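/- For 0 < β ≤ α < 1/2, F(α,β) ≥ f(β), where F(α,β) = 2(α ln(α/(1-β)) + (1-α) ln((1-α)/β)) / (Φ⁻¹(α) + Φ⁻¹(β))² and f(β) = ((1-2β)/2) ln((1-β)/β) / (Φ⁻¹(β))². -/

import Mathlib

open Real Set Filter Topology

noncomputable def phi (y : ℝ) : ℝ := (Real.sqrt (2 * Real.pi))⁻¹ * Real.exp (-y ^ 2 / 2)

noncomputable def Phi (x : ℝ) : ℝ := ∫ y in Set.Iic x, phi y

noncomputable def PhiInv (a : ℝ) : ℝ := Function.invFun Phi a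

theorem le_of_hasDerivAt_nonneg {f f' : ℝ → ℝ} {a b : ℝ} (hab : a ≤ b)
    (hf : ∀ t ∈ Icc a b, HasDerivAt f (f' t) t) (hf' : ∀ t ∈ Icc a b, 0 ≤ f' t) : f a ≤ f b := by
  have hmono : MonotoneOn f (Icc a b) := by
    refine monotoneOn_of_deriv_nonneg (convex_Icc a b)
      (fun t ht => (hf t ht).continuousAt.continuousWithinAt)
      (fun t ht => (hf t (interior_subset ht)).differentiableAt.differentiableWithinAt) ?_
    intro t ht
    rw [(hf t (interior_subset ht)).deriv]
    exact hf' t (interior_subset ht)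
  exact hmono (left_mem_Icc.2 hab) (right_mem_Icc.2 hab) hab

theorem phi_pos (x : ℝ) : 0 < phi x := by
  unfold phi
  positivity

theorem hasDerivAt_phi (x : ℝ) : HasDerivAt phi (-x * phi x) x := by
  have h : HasDerivAt (fun y : ℝ => -y ^ 2 / 2) (-x) x := by
    refine ((hasDerivAt_pow 2 x).neg.div_const 2).congr_deriv ?_
    push_cast
    ring
  refine (h.exp.const_mul (Real.sqrt (2 * Real.pi))⁻¹).congr_deriv ?_
  unfold phi
  ring

theorem continuous_phi : Continuous phi :=
  continuous_iff_continuousAt.2 fun x => (hasDerivAt_phi x).continuousAt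

theorem phi_eq_gaussian :
    phi = fun x => (Real.sqrt (2 * Real.pi))⁻¹ * Real.exp (-(1 / 2) * x ^ 2) := by
  ext x
  unfold phi
  congr 2
  ring

theorem integrable_phi : MeasureTheory.Integrable phi := by
  rw [phi_eq_gaussian]
  exact (integrable_exp_neg_mul_sq (by norm_num)).const_mul _

theorem integral_phi_Ioi : ∫ x in Ioi (0 : ℝ), phi x = 1 / 2 := by
  rw [phi_eq_gaussian, MeasureTheory.integral_const_mul, integral_gaussian_Ioi]
  have h : Real.sqrt (2 * Real.pi) ≠ 0 := by positivity
  rw [show Real.pi / (1 / 2) = 2 * Real.pi by ring]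
  field_simp

theorem phi_neg (x : ℝ) : phi (-x) = phi x := by simp [phi]

theorem integral_phi_Iic : ∫ x in Iic (0 : ℝ), phi x = 1 / 2 := by
  have h := integral_comp_neg_Iic 0 phi
  simp only [phi_neg, neg_zero] at h
  rw [h, integral_phi_Ioi]

theorem tendsto_phi_atTop : Tendsto phi atTop (𝓝 0) := by
  have h : Tendsto (fun x : ℝ => -x ^ 2 / 2) atTop atBot :=
    (tendsto_neg_atTop_atBot.comp (tendsto_pow_atTop (two_ne_zero))).atBot_div_const (by norm_num)
  rw [← mul_zero (Real.sqrt (2 * Real.pi))⁻¹]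
  exact (Real.tendsto_exp_atBot.comp h).const_mul _

/-- The probability that a standard normal variable lies in `[-x, x]`, extended to an odd
function. -/
noncomputable def centralMass (x : ℝ) : ℝ := 2 * ∫ t in (0 : ℝ)..x, phi t

theorem centralMass_zero : centralMass 0 = 0 := by simp [centralMass]

theorem hasDerivAt_centralMass (x : ℝ) : HasDerivAt centralMass (2 * phi x) x :=
  (intervalIntegral.integral_hasDerivAt_right (continuous_phi.intervalIntegrable _ _)
    continuous_phi.stronglyMeasurable.stronglyMeasurableAtFilter
    continuous_phi.continuousAt).const_mul 2

theorem strictMono_centralMass : StrictMono centralMass :=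
  strictMono_of_hasDerivAt_pos hasDerivAt_centralMass fun x => by
    have := phi_pos x
    positivity

theorem continuous_centralMass : Continuous centralMass :=
  continuous_iff_continuousAt.2 fun x => (hasDerivAt_centralMass x).continuousAt

theorem centralMass_neg (x : ℝ) : centralMass (-x) = -centralMass x := by
  have h := intervalIntegral.integral_comp_neg (a := 0) (b := x) phi
  simp only [phi_neg, neg_zero] at h
  rw [centralMass, centralMass, h, intervalIntegral.integral_symm]
  ring

theorem tendsto_centralMass_atTop : Tendsto centralMass atTop (𝓝 1) := by
  have h := (MeasureTheory.intervalIntegral_tendsto_integral_Ioi 0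
    integrable_phi.integrableOn tendsto_id).const_mul 2
  rwa [integral_phi_Ioi, mul_one_div_cancel two_ne_zero] at h

theorem centralMass_lt_one (x : ℝ) : centralMass x < 1 :=
  (strictMono_centralMass (lt_add_one x)).trans_le
    (strictMono_centralMass.monotone.ge_of_tendsto tendsto_centralMass_atTop _)

theorem neg_one_lt_centralMass (x : ℝ) : -1 < centralMass x := by
  have h := centralMass_lt_one (-x)
  rw [centralMass_neg] at h
  linarith

theorem centralMass_nonneg {x : ℝ} (hx : 0 ≤ x) : 0 ≤ centralMass x := by
  simpa [centralMass_zero] using strictMono_centralMass.monotone hx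

theorem Phi_eq (x : ℝ) : Phi x = (1 + centralMass x) / 2 := by
  have h := intervalIntegral.integral_Iic_sub_Iic (a := 0) (b := x)
    integrable_phi.integrableOn integrable_phi.integrableOn
  rw [integral_phi_Iic] at h
  rw [Phi, centralMass, ← h]
  ring

theorem centralMass_PhiInv {a : ℝ} (h0 : 0 < a) (h1 : a < 1 / 2) :
    centralMass (-PhiInv a) = 1 - 2 * a := by
  obtain ⟨b, hb, hb0⟩ := ((tendsto_centralMass_atTop.eventually
    (lt_mem_nhds (show 1 - 2 * a < 1 by linarith))).and (eventually_ge_atTop 0)).exists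
  obtain ⟨x, -, hx⟩ := intermediate_value_Icc hb0 continuous_centralMass.continuousOn
    (show 1 - 2 * a ∈ Icc (centralMass 0) (centralMass b) by
      rw [centralMass_zero]
      constructor <;> linarith)
  have h : Phi (PhiInv a) = a := by
    refine Function.invFun_eq ⟨-x, ?_⟩
    rw [Phi_eq, centralMass_neg, hx]
    ring
  rw [Phi_eq] at h
  rw [centralMass_neg]
  linarith

theorem one_sub_centralMass_sq_pos (x : ℝ) : 0 < 1 - centralMass x ^ 2 := by
  have h1 := centralMass_lt_one x
  have h2 := neg_one_lt_centralMass x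
  nlinarith

theorem two_mul_phi_le_centralMass {x : ℝ} (hx : 0 ≤ x) : 2 * x * phi x ≤ centralMass x := by
  have h := le_of_hasDerivAt_nonneg (f := fun t => centralMass t - 2 * t * phi t)
    (f' := fun t => 2 * t ^ 2 * phi t) hx
    (fun t _ => by
      refine ((hasDerivAt_centralMass t).sub
        (((hasDerivAt_id t).const_mul 2).mul (hasDerivAt_phi t))).congr_deriv ?_
      simp only [id]
      ring)
    (fun t _ => by
      have := phi_pos t
      positivity)
  simp only [centralMass_zero] at h
  linarith

theorem hasDerivAt_phi_mul_centralMass_div {x : ℝ} (hx : x ≠ 0) :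
    HasDerivAt (fun t => 4 * phi t * centralMass t / t)
      (4 * phi x * (2 * x * phi x - centralMass x - x ^ 2 * centralMass x) / x ^ 2) x := by
  refine ((((hasDerivAt_phi x).const_mul 4).mul (hasDerivAt_centralMass x)).div
    (hasDerivAt_id x) hx).congr_deriv ?_
  simp only [id, Pi.mul_apply]
  congr 1
  ring

theorem hasDerivAt_one_sub_centralMass_sq (x : ℝ) :
    HasDerivAt (fun t => 1 - centralMass t ^ 2) (-4 * phi x * centralMass x) x := by
  refine (((hasDerivAt_centralMass x).pow 2).const_sub 1).congr_deriv ?_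
  push_cast
  ring

theorem tendsto_phi_mul_centralMass_div :
    Tendsto (fun t => 4 * phi t * centralMass t / t) atTop (𝓝 0) := by
  have h := (((tendsto_phi_atTop.const_mul 4).mul tendsto_centralMass_atTop).mul
    tendsto_inv_atTop_zero)
  simpa [div_eq_mul_inv] using h

theorem tendsto_one_sub_centralMass_sq :
    Tendsto (fun t => 1 - centralMass t ^ 2) atTop (𝓝 0) := by
  simpa using (tendsto_centralMass_atTop.pow 2).const_sub 1

theorem mul_one_sub_centralMass_sq_le {x : ℝ} (hx : 0 ≤ x) :
    x * (1 - centralMass x ^ 2) ≤ 4 * phi x * centralMass x := by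
  rcases hx.eq_or_lt with rfl | hx
  · simp [centralMass_zero]
  have hlim : Tendsto (fun t => (1 - centralMass t ^ 2) - 4 * phi t * centralMass t / t) atTop
      (𝓝 0) := by
    simpa using tendsto_one_sub_centralMass_sq.sub tendsto_phi_mul_centralMass_div
  have h := ge_of_tendsto hlim ((eventually_ge_atTop x).mono fun b hb =>
    le_of_hasDerivAt_nonneg hb
      (fun t ht => (hasDerivAt_one_sub_centralMass_sq t).sub
        (hasDerivAt_phi_mul_centralMass_div (hx.trans_le ht.1).ne'))
      (fun t ht => by
        have ht0 : 0 < t := hx.trans_le ht.1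
        have h1 := two_mul_phi_le_centralMass ht0.le
        have h2 := phi_pos t
        have : -4 * phi t * centralMass t
            - 4 * phi t * (2 * t * phi t - centralMass t - t ^ 2 * centralMass t) / t ^ 2
            = 4 * phi t * (centralMass t - 2 * t * phi t) / t ^ 2 := by
          field_simp
          ring
        rw [this]
        have := sub_nonneg.2 h1
        positivity))
  have h' : 1 - centralMass x ^ 2 ≤ 4 * phi x * centralMass x / x := by linarith
  rw [le_div_iff₀ hx] at h'
  linarith

theorem centralMass_mul_le {x : ℝ} (hx : 0 ≤ x) :
    centralMass x * (1 - 2 * x ^ 2) ≤ 2 * x * phi x := by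
  have h := le_of_hasDerivAt_nonneg
    (f := fun t => 2 * t * phi t - centralMass t * (1 - 2 * t ^ 2))
    (f' := fun t => 2 * t ^ 2 * phi t + 4 * t * centralMass t) hx
    (fun t _ => by
      refine ((((hasDerivAt_id t).const_mul 2).mul (hasDerivAt_phi t)).sub
        ((hasDerivAt_centralMass t).mul
          (((hasDerivAt_pow 2 t).const_mul 2).const_sub 1))).congr_deriv ?_
      simp only [id]
      push_cast
      ring)
    (fun t ht => by
      have := phi_pos t
      have := centralMass_nonneg ht.1
      have := ht.1
      positivity)
  simp only [centralMass_zero] at h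
  linarith

theorem phi_mul_centralMass_le {x : ℝ} (hx : 0 ≤ x) :
    4 * phi x * centralMass x ≤ 3 * x * (1 - centralMass x ^ 2) := by
  rcases hx.eq_or_lt with rfl | hx
  · simp [centralMass_zero]
  have hlim : Tendsto (fun t => 4 * phi t * centralMass t / t - 3 * (1 - centralMass t ^ 2)) atTop
      (𝓝 0) := by
    simpa using tendsto_phi_mul_centralMass_div.sub (tendsto_one_sub_centralMass_sq.const_mul 3)
  have h := ge_of_tendsto hlim ((eventually_ge_atTop x).mono fun b hb =>
    le_of_hasDerivAt_nonneg hb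
      (fun t ht => (hasDerivAt_phi_mul_centralMass_div (hx.trans_le ht.1).ne').sub
        ((hasDerivAt_one_sub_centralMass_sq t).const_mul 3))
      (fun t ht => by
        have ht0 : 0 < t := hx.trans_le ht.1
        have h1 := centralMass_mul_le ht0.le
        have h2 := phi_pos t
        have : 4 * phi t * (2 * t * phi t - centralMass t - t ^ 2 * centralMass t) / t ^ 2
            - 3 * (-4 * phi t * centralMass t)
            = 4 * phi t * (2 * t * phi t - centralMass t * (1 - 2 * t ^ 2)) / t ^ 2 := by
          field_simp
          ring
        rw [this]
        have := sub_nonneg.2 h1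
        positivity))
  have h' : 4 * phi x * centralMass x / x ≤ 3 * (1 - centralMass x ^ 2) := by linarith
  rw [div_le_iff₀ hx] at h'
  linarith

/-- The log-odds of the standard normal distribution function. -/
noncomputable def logitPhi (x : ℝ) : ℝ :=
  Real.log (1 + centralMass x) - Real.log (1 - centralMass x)

/-- The derivative of `logitPhi`. -/
noncomputable def logitPhiDeriv (x : ℝ) : ℝ := 4 * phi x / (1 - centralMass x ^ 2)

theorem logitPhi_zero : logitPhi 0 = 0 := by simp [logitPhi, centralMass_zero]

theorem logitPhiDeriv_pos (x : ℝ) : 0 < logitPhiDeriv x :=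
  div_pos (mul_pos four_pos (phi_pos x)) (one_sub_centralMass_sq_pos x)

theorem hasDerivAt_log_one_add_centralMass (x : ℝ) :
    HasDerivAt (fun t => Real.log (1 + centralMass t)) (2 * phi x / (1 + centralMass x)) x :=
  ((hasDerivAt_centralMass x).const_add 1).log (by linarith [neg_one_lt_centralMass x])

theorem hasDerivAt_log_one_sub_centralMass (x : ℝ) :
    HasDerivAt (fun t => Real.log (1 - centralMass t)) (-(2 * phi x) / (1 - centralMass x)) x :=
  ((hasDerivAt_centralMass x).const_sub 1).log (by linarith [centralMass_lt_one x])

theorem hasDerivAt_logitPhi (x : ℝ) : HasDerivAt logitPhi (logitPhiDeriv x) x := by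
  refine ((hasDerivAt_log_one_add_centralMass x).sub
    (hasDerivAt_log_one_sub_centralMass x)).congr_deriv ?_
  have h1 : 1 + centralMass x ≠ 0 := by linarith [neg_one_lt_centralMass x]
  have h2 : 1 - centralMass x ≠ 0 := by linarith [centralMass_lt_one x]
  have h3 := (one_sub_centralMass_sq_pos x).ne'
  unfold logitPhiDeriv
  field_simp
  ring

theorem hasDerivAt_logitPhiDeriv (x : ℝ) :
    HasDerivAt logitPhiDeriv
      (logitPhiDeriv x * ((4 * phi x * centralMass x - x * (1 - centralMass x ^ 2))
        / (1 - centralMass x ^ 2))) x := by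
  have h3 := (one_sub_centralMass_sq_pos x).ne'
  refine (((hasDerivAt_phi x).const_mul 4).div
    (hasDerivAt_one_sub_centralMass_sq x) h3).congr_deriv ?_
  unfold logitPhiDeriv
  field_simp
  ring

theorem logitPhi_nonneg {x : ℝ} (hx : 0 ≤ x) : 0 ≤ logitPhi x := by
  have h := le_of_hasDerivAt_nonneg hx (fun t _ => hasDerivAt_logitPhi t)
    (fun t _ => (logitPhiDeriv_pos t).le)
  rwa [logitPhi_zero] at h

theorem logitPhiDeriv_le {x y : ℝ} (hx : 0 ≤ x) (hxy : x ≤ y) :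
    logitPhiDeriv x ≤ logitPhiDeriv y :=
  le_of_hasDerivAt_nonneg hxy (fun t _ => hasDerivAt_logitPhiDeriv t) fun t ht =>
    mul_nonneg (logitPhiDeriv_pos t).le <| div_nonneg
      (sub_nonneg.2 (mul_one_sub_centralMass_sq_le (hx.trans ht.1)))
      (one_sub_centralMass_sq_pos t).le

theorem mul_logitPhiDeriv_le {x : ℝ} (hx : 0 ≤ x) :
    x * logitPhiDeriv x ≤ (1 + 2 * x ^ 2) * logitPhi x := by
  have h := le_of_hasDerivAt_nonneg
    (f := fun t => (1 + 2 * t ^ 2) * logitPhi t - t * logitPhiDeriv t)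
    (f' := fun t => t * (4 * logitPhi t + logitPhiDeriv t *
      ((3 * t * (1 - centralMass t ^ 2) - 4 * phi t * centralMass t)
        / (1 - centralMass t ^ 2)))) hx
    (fun t _ => by
      refine ((((((hasDerivAt_pow 2 t).const_mul 2).const_add 1).mul (hasDerivAt_logitPhi t)).sub
        ((hasDerivAt_id t).mul (hasDerivAt_logitPhiDeriv t)))).congr_deriv ?_
      have h3 := (one_sub_centralMass_sq_pos t).ne'
      simp only [id]
      push_cast
      field_simp
      ring)
    (fun t ht => by
      have h1 := logitPhi_nonneg ht.1
      have h2 := (logitPhiDeriv_pos t).le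
      have h3 := (one_sub_centralMass_sq_pos t).le
      have h4 := sub_nonneg.2 (phi_mul_centralMass_le ht.1)
      have := ht.1
      positivity)
  simp only [logitPhi_zero] at h
  linarith

theorem add_mul_logitPhiDeriv_le {x y : ℝ} (hx : 0 ≤ x) (hxy : x ≤ y) :
    (x + y) * logitPhiDeriv x ≤ (logitPhi x + logitPhi y) * (1 + x * (x + y)) := by
  have h := le_of_hasDerivAt_nonneg
    (f := fun t => (logitPhi x + logitPhi t) * (1 + x * (x + t)) - (x + t) * logitPhiDeriv x)
    (f' := fun t => (logitPhiDeriv t - logitPhiDeriv x) + logitPhiDeriv t * (x * (x + t))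
      + (logitPhi x + logitPhi t) * x) hxy
    (fun t _ => by
      refine (((((hasDerivAt_logitPhi t).const_add _).mul
        ((((hasDerivAt_id t).const_add x).const_mul x).const_add 1))).sub
        (((hasDerivAt_id t).const_add x).mul_const _)).congr_deriv ?_
      simp only [id]
      ring)
    (fun t ht => by
      have ht0 := hx.trans ht.1
      have h1 := logitPhi_nonneg ht0
      have h2 := logitPhi_nonneg hx
      have h3 := (logitPhiDeriv_pos t).le
      have h4 := sub_nonneg.2 (logitPhiDeriv_le hx ht.1)
      positivity)
  have h' := mul_logitPhiDeriv_le hx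
  nlinarith

/-- The Kullback-Leibler divergence between Bernoulli laws with parameters `Φ(-x)` and `Φ(y)`. -/
noncomputable def bernoulliDiv (y x : ℝ) : ℝ :=
  (1 - centralMass x) / 2 * (Real.log (1 - centralMass x) - Real.log (1 + centralMass y))
    + (1 + centralMass x) / 2 * (Real.log (1 + centralMass x) - Real.log (1 - centralMass y))

theorem hasDerivAt_bernoulliDiv (y x : ℝ) :
    HasDerivAt (bernoulliDiv y) (phi x * (logitPhi x + logitPhi y)) x := by
  have h1 : 1 + centralMass x ≠ 0 := by linarith [neg_one_lt_centralMass x]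
  have h2 : 1 - centralMass x ≠ 0 := by linarith [centralMass_lt_one x]
  refine (((((hasDerivAt_centralMass x).const_sub 1).div_const 2).mul
    ((hasDerivAt_log_one_sub_centralMass x).sub_const _)).add
    ((((hasDerivAt_centralMass x).const_add 1).div_const 2).mul
    ((hasDerivAt_log_one_add_centralMass x).sub_const _))).congr_deriv ?_
  unfold logitPhi
  field_simp
  ring

theorem mul_log_sub_log_le {v : ℝ} (h0 : 0 ≤ v) (h1 : v < 1) :
    v * (Real.log (1 + v) - Real.log (1 - v)) ≤
      2 * (-Real.log (1 + v) - Real.log (1 - v)) := by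
  have hadd : ∀ t ∈ Icc 0 v, HasDerivAt (fun t => Real.log (1 + t)) (1 / (1 + t)) t := fun t ht =>
    ((hasDerivAt_id t).const_add 1).log (by simp only [id]; linarith [ht.1])
  have hsub : ∀ t ∈ Icc 0 v, HasDerivAt (fun t => Real.log (1 - t)) (-1 / (1 - t)) t := fun t ht =>
    ((hasDerivAt_id t).const_sub 1).log (by simp only [id]; linarith [ht.2])
  have hlog : ∀ t ∈ Icc 0 v, Real.log (1 + t) - Real.log (1 - t) ≤ 2 * t / (1 - t ^ 2) := by
    intro s hs
    have h := le_of_hasDerivAt_nonneg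
      (f := fun t => 2 * t / (1 - t ^ 2) - (Real.log (1 + t) - Real.log (1 - t)))
      (f' := fun t => 4 * t ^ 2 / (1 - t ^ 2) ^ 2) hs.1
      (fun t ht => by
        have ht' : t ∈ Icc 0 v := ⟨ht.1, ht.2.trans hs.2⟩
        have h2 : 1 + t ≠ 0 := by linarith [ht'.1]
        have h3 : 1 - t ≠ 0 := by linarith [ht'.2]
        have h4 : 1 - t ^ 2 ≠ 0 := by
          rw [show 1 - t ^ 2 = (1 + t) * (1 - t) by ring]
          exact mul_ne_zero h2 h3
        refine ((((hasDerivAt_id t).const_mul 2).div ((hasDerivAt_pow 2 t).const_sub 1) h4).sub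
          ((hadd t ht').sub (hsub t ht'))).congr_deriv ?_
        simp only [id]
        push_cast
        field_simp
        ring)
      (fun t ht => by positivity)
    simp at h
    linarith
  have h := le_of_hasDerivAt_nonneg
    (f := fun t => 2 * (-Real.log (1 + t) - Real.log (1 - t))
      - t * (Real.log (1 + t) - Real.log (1 - t)))
    (f' := fun t => 2 * t / (1 - t ^ 2) - (Real.log (1 + t) - Real.log (1 - t))) h0
    (fun t ht => by
      have h2 : 1 + t ≠ 0 := by linarith [ht.1]
      have h3 : 1 - t ≠ 0 := by linarith [ht.2]
      have h4 : 1 - t ^ 2 ≠ 0 := by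
        rw [show 1 - t ^ 2 = (1 + t) * (1 - t) by ring]
        exact mul_ne_zero h2 h3
      refine ((((hadd t ht).neg.sub (hsub t ht)).const_mul 2).sub
        ((hasDerivAt_id t).mul ((hadd t ht).sub (hsub t ht)))).congr_deriv ?_
      simp only [id, Pi.sub_apply]
      field_simp
      ring)
    (fun t ht => sub_nonneg.2 (hlog t ht))
  simp at h
  linarith

theorem bernoulliDiv_self (y : ℝ) : bernoulliDiv y y = centralMass y * logitPhi y := by
  unfold bernoulliDiv logitPhi
  ring

theorem bernoulliDiv_self_le {y : ℝ} (hy : 0 ≤ y) : bernoulliDiv y y ≤ 4 * bernoulliDiv y 0 := by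
  have h := mul_log_sub_log_le (centralMass_nonneg hy) (centralMass_lt_one y)
  rw [bernoulliDiv_self]
  unfold bernoulliDiv logitPhi
  simp only [centralMass_zero, sub_zero, add_zero, Real.log_one]
  linarith

theorem bernoulliDiv_div_sq_le {x y : ℝ} (hx : 0 ≤ x) (hxy : x ≤ y) (hy : 0 < y) :
    bernoulliDiv y y / (y + y) ^ 2 ≤ bernoulliDiv y x / (x + y) ^ 2 := by
  set D : ℝ → ℝ := fun t => 2 * bernoulliDiv y t - (t + y) * (phi t * (logitPhi t + logitPhi y))
    with hD
  have hDmono : ∀ s t, 0 ≤ s → s ≤ t → t ≤ y → D s ≤ D t := by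
    intro s t hs hst hty
    refine le_of_hasDerivAt_nonneg (f' := fun t => phi t *
      ((logitPhi t + logitPhi y) * (1 + t * (t + y)) - (t + y) * logitPhiDeriv t)) hst
      (fun r _ => ?_) (fun r hr => ?_)
    · refine (((hasDerivAt_bernoulliDiv y r).const_mul 2).sub
        (((hasDerivAt_id r).add_const y).mul ((hasDerivAt_phi r).mul
          ((hasDerivAt_logitPhi r).add_const _)))).congr_deriv ?_
      simp only [id, Pi.mul_apply]
      ring
    · exact mul_nonneg (phi_pos r).le
        (sub_nonneg.2 (add_mul_logitPhiDeriv_le (hs.trans hr.1) (hr.2.trans hty)))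
  have hquot : ∀ t, 0 ≤ t →
      HasDerivAt (fun t => bernoulliDiv y t / (t + y) ^ 2) (-D t / (t + y) ^ 3) t := by
    intro t ht
    have hne : t + y ≠ 0 := by positivity
    refine ((hasDerivAt_bernoulliDiv y t).div (((hasDerivAt_id t).add_const y).pow 2)
      (pow_ne_zero 2 hne)).congr_deriv ?_
    simp only [id, hD, Pi.pow_apply]
    push_cast
    field_simp
    ring
  rcases le_total 0 (D x) with hDx | hDx
  · have h := le_of_hasDerivAt_nonneg hxy
      (fun t ht => (hquot t (hx.trans ht.1)).neg) (fun t ht => by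
        have h1 := hDx.trans (hDmono x t hx ht.1 ht.2)
        have h2 := hx.trans ht.1
        rw [neg_div, neg_neg]
        positivity)
    simpa using h
  · have h := le_of_hasDerivAt_nonneg hx
      (fun t ht => hquot t ht.1) (fun t ht => by
        have h1 := neg_nonneg.2 ((hDmono t x ht.1 ht.2 hxy).trans hDx)
        have h2 := ht.1
        positivity)
    refine le_trans ?_ h
    simp only [zero_add]
    rw [div_le_div_iff₀ (by positivity) (by positivity)]
    nlinarith [mul_le_mul_of_nonneg_right (bernoulliDiv_self_le hy.le) (sq_nonneg y)]

theorem asymmetric_efficiency_bound (α β : ℝ) (hβ : 0 < β) (hβα : β ≤ α) (hα : α < 1 / 2) :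
    2 * (α * Real.log (α / (1 - β)) + (1 - α) * Real.log ((1 - α) / β))
        / (PhiInv α + PhiInv β) ^ 2
      ≥ ((1 - 2 * β) / 2 * Real.log ((1 - β) / β)) / (PhiInv β) ^ 2 := by
  have hα0 : 0 < α := hβ.trans_le hβα
  have hβ1 : β < 1 / 2 := hβα.trans_lt hα
  have hux := centralMass_PhiInv hα0 hα
  have huy := centralMass_PhiInv hβ hβ1
  set x := -PhiInv α with hx
  set y := -PhiInv β with hy
  have hx0 : 0 < x := strictMono_centralMass.lt_iff_lt.1 (by
    rw [centralMass_zero, hux]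
    linarith)
  have hxy : x ≤ y := strictMono_centralMass.le_iff_le.1 (by
    rw [hux, huy]
    linarith)
  have h := bernoulliDiv_div_sq_le hx0.le hxy (hx0.trans_le hxy)
  have hlog : ∀ a b : ℝ, 0 < a → 0 < b → Real.log (a / b) = Real.log (2 * a) - Real.log (2 * b) :=
    fun a b ha hb => by
      rw [← Real.log_div (by positivity) (by positivity), mul_div_mul_left _ _ two_ne_zero]
  rw [bernoulliDiv_self] at h
  unfold bernoulliDiv logitPhi at h
  rw [hux, huy] at h
  rw [hlog α (1 - β) hα0 (by linarith), hlog (1 - α) β (by linarith) hβ,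
    hlog (1 - β) β (by linarith) hβ, show PhiInv α = -x by simp [hx],
    show PhiInv β = -y by simp [hy]]
  rw [show 1 - (1 - 2 * α) = 2 * α by ring, show 1 + (1 - 2 * α) = 2 * (1 - α) by ring,
    show 1 - (1 - 2 * β) = 2 * β by ring, show 1 + (1 - 2 * β) = 2 * (1 - β) by ring] at h
  refine (Eq.trans_le ?_ (mul_le_mul_of_nonneg_left h zero_le_two)).trans_eq ?_
  · rw [neg_sq, ← two_mul y, mul_pow, ← div_div]
    ring
  · rw [show (-x + -y) ^ 2 = (x + y) ^ 2 by ring]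
    ring
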